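/- Let S = {0,1,2,3} ⊆ Z/7Z. The R-palette graph G_S contains no connected R-subgraph with at least three vertices. -/

import Mathlib

/-- Adjacency in the R-palette graph `G_S` of a subset `S ⊆ ZMod p`. -/
def RAdj (p : ℕ) (S : Set (ZMod p)) (b₁ b₂ : ZMod p) : Prop :=
  b₁ ≠ b₂ ∧ ∃ a₁ ∈ S, ∃ a₂ ∈ S, ∃ a₃ ∈ S, ∃ a₄ ∈ S,
    a₁ + a₂ = b₁ ∧ a₃ + a₄ = b₂ ∧ (a₁ + a₃ = a₂ + a₄ ∨ a₁ + a₄ = a₂ + a₃)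

/-- `(V, E)` is a connected R-subgraph of the R-palette graph `G_S`:
vertices are sums of two elements of `S`, edges are edges of `G_S` between
vertices of `V` whose label `2⁻¹(b₁+b₂)` is again a vertex of `V`, and any two
vertices of `V` are joined by a path of edges of `E`. -/
def IsConnectedRSubgraph (p : ℕ) (S : Set (ZMod p)) (V : Set (ZMod p))
    (E : ZMod p → ZMod p → Prop) : Prop :=
  (∀ b ∈ V, ∃ a ∈ S, ∃ a' ∈ S, a + a' = b) ∧
  (∀ b₁ b₂, E b₁ b₂ → E b₂ b₁) ∧
  (∀ b₁ b₂, E b₁ b₂ →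
    b₁ ∈ V ∧ b₂ ∈ V ∧ RAdj p S b₁ b₂ ∧ (2 : ZMod p)⁻¹ * (b₁ + b₂) ∈ V) ∧
  (∀ b ∈ V, ∀ b' ∈ V, Relation.ReflTransGen E b b')

theorem radj_facts (x y : ZMod 7) (h : RAdj 7 ({0, 1, 2, 3} : Set (ZMod 7)) x y) :
    x.val % 2 = y.val % 2 ∧
      (((2 : ZMod 7)⁻¹ * (x + y)).val % 2 = x.val % 2 → x.val % 4 = y.val % 4) := by
  have h2 : (2 : ZMod 7)⁻¹ = 4 := by
    have : Fact (Nat.Prime 7) := ⟨by norm_num⟩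
    have h : (2 : ZMod 7) * 4 = 1 := rfl
    exact (eq_inv_of_mul_eq_one_right h).symm
  rw [h2]
  obtain ⟨hne, a, ha, b, hb, c, hc, d, hd, rfl, rfl, h⟩ := h
  simp only [Set.mem_insert_iff, Set.mem_singleton_iff] at ha hb hc hd
  rcases ha with rfl | rfl | rfl | rfl <;> rcases hb with rfl | rfl | rfl | rfl <;>
  rcases hc with rfl | rfl | rfl | rfl <;> rcases hd with rfl | rfl | rfl | rfl <;>
  revert hne h <;> decide

theorem const_of_conn {E : ZMod 7 → ZMod 7 → Prop} (f : ZMod 7 → ℕ)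
    (hE : ∀ x y, E x y → f x = f y) {x y : ZMod 7} (h : Relation.ReflTransGen E x y) :
    f x = f y := by
  induction h with
  | refl => rfl
  | tail _ h ih => exact ih.trans (hE _ _ h)

theorem stmt12 :
    ¬ ∃ (V : Set (ZMod 7)) (E : ZMod 7 → ZMod 7 → Prop),
      IsConnectedRSubgraph 7 ({0, 1, 2, 3} : Set (ZMod 7)) V E ∧ 3 ≤ V.ncard := by
  rintro ⟨V, E, ⟨-, -, hE, hc⟩, hV⟩
  have h1 : ∀ x ∈ V, ∀ y ∈ V, x.val % 2 = y.val % 2 := fun x hx y hy =>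
    const_of_conn (fun z => z.val % 2)
      (fun a b h => (radj_facts a b (hE a b h).2.2.1).1) (hc x hx y hy)
  have h2 : ∀ x ∈ V, ∀ y ∈ V, x.val % 4 = y.val % 4 := fun x hx y hy =>
    const_of_conn (fun z => z.val % 4)
      (fun a b h => (radj_facts a b (hE a b h).2.2.1).2
        (h1 _ (hE a b h).2.2.2 _ (hE a b h).1)) (hc x hx y hy)
  obtain ⟨a, ha, b, hb, c, hc', hab, hac, hbc⟩ := (Set.two_lt_ncard (Set.toFinite V)).1 hV
  have key : ∀ a b c : ZMod 7, a.val % 4 = b.val % 4 → a.val % 4 = c.val % 4 →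
      a ≠ b → a ≠ c → b ≠ c → False := by decide
  exact key a b c (h2 a ha b hb) (h2 a ha c hc') hab hac hbc
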